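/- arXiv:1210.2016 — 12 statements merged into one kernel-verified Lean document; each statement's English description precedes it below -/
import Mathlib

section
/- Let w, w′ ∈ ℂ with Re w′ ≥ 0, and let C ≥ 0 satisfy Re w′ ≤ Re w ≤ Re w′ + C, |Im w| ≤ |Im w′| + C, and |Im w′| ≤ |Im w| + C. Then for every real λ with λ > 0 and λ ≥ 2C one has (1/4)·Re(1/(λ + w′)) ≤ Re(1/(λ + w)) ≤ 4·Re(1/(λ + w′)). -/
/-- Pointwise comparison of resolvent kernels (estimate (2.9) in the proof of
Theorem 2.1): if `Re w' ≥ 0`, `Re w' ≤ Re w ≤ Re w' + C`, `|Im w| ≤ |Im w'| + C`,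
`|Im w'| ≤ |Im w| + C`, then for every `λ > 0` with `λ ≥ 2C`,
`(1/4)·Re(1/(λ+w')) ≤ Re(1/(λ+w)) ≤ 4·Re(1/(λ+w'))`. -/
theorem stmt_1 (w w' : ℂ) (C : ℝ) (hC : 0 ≤ C) (hre' : 0 ≤ w'.re)
    (h1 : w'.re ≤ w.re) (h2 : w.re ≤ w'.re + C)
    (h3 : |w.im| ≤ |w'.im| + C) (h4 : |w'.im| ≤ |w.im| + C) :
    ∀ l : ℝ, 0 < l → 2 * C ≤ l →
      (1 / 4) * (1 / ((l : ℂ) + w')).re ≤ (1 / ((l : ℂ) + w)).re ∧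
      (1 / ((l : ℂ) + w)).re ≤ 4 * (1 / ((l : ℂ) + w')).re := by
  intro l hl hCl
  have key : ∀ z : ℂ, (1 / ((l : ℂ) + z)).re = (l + z.re) / ((l + z.re) ^ 2 + |z.im| ^ 2) := by
    intro z
    rw [one_div, Complex.inv_re, Complex.normSq_apply, sq_abs]
    simp [sq]
  rw [key, key]
  have hy := abs_nonneg w.im
  have hy' := abs_nonneg w'.im
  generalize |w.im| = y at *
  generalize |w'.im| = y' at *
  obtain ⟨a, ha⟩ : ∃ a, a = l + w.re := ⟨_, rfl⟩
  obtain ⟨b, hb⟩ : ∃ b, b = l + w'.re := ⟨_, rfl⟩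
  rw [← ha, ← hb]
  have hb0 : 0 < b := by linarith
  have hab : b ≤ a := by linarith
  have ha0 : 0 < a := by linarith
  have hab2 : a ≤ 3 / 2 * b := by linarith
  have e1 : y ^ 2 ≤ 2 * y' ^ 2 + b ^ 2 / 2 := by
    have : y ^ 2 ≤ (y' + b / 2) ^ 2 := pow_le_pow_left₀ hy (by linarith) 2
    nlinarith [sq_nonneg (y' - b / 2)]
  have e2 : y' ^ 2 ≤ 2 * y ^ 2 + b ^ 2 / 2 := by
    have : y' ^ 2 ≤ (y + b / 2) ^ 2 := pow_le_pow_left₀ hy' (by linarith) 2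
    nlinarith [sq_nonneg (y - b / 2)]
  have p1 : 0 < a ^ 2 + y ^ 2 := by positivity
  have p2 : 0 < b ^ 2 + y' ^ 2 := by positivity
  have f1 := mul_le_mul_of_nonneg_left e1 hb0.le
  have f2 := mul_le_mul_of_nonneg_left e2 ha0.le
  have g1 := mul_le_mul_of_nonneg_left hab2 (mul_pos ha0 hb0).le
  have g2 := mul_le_mul_of_nonneg_left hab (sq_nonneg b)
  have g3 := mul_le_mul_of_nonneg_left hab (sq_nonneg y')
  have g4 := mul_le_mul_of_nonneg_left hab (mul_pos ha0 hb0).le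
  have g5 := mul_le_mul_of_nonneg_left hab2 (sq_nonneg y)
  have q1 : 0 ≤ a * b ^ 2 := by positivity
  have q2 : 0 ≤ a * y' ^ 2 := by positivity
  have q3 : 0 ≤ b * y ^ 2 := by positivity
  have q4 : 0 ≤ b * a ^ 2 := by positivity
  constructor
  · rw [← mul_div_assoc, div_le_div_iff₀ p2 p1]
    nlinarith
  · rw [← mul_div_assoc, div_le_div_iff₀ p1 p2]
    nlinarith
end

section
/- Let n ≥ 1, let A, B : ℝⁿ → ℝ be Borel measurable with 1 ≤ A(z) ≤ B(z) for all z, let g : ℝⁿ → [0,∞) be Borel measurable, and let f : [1,∞) → (0,∞) be increasing. Then ∫₁^∞ (λ f(λ))^{-1} ( ∫_{{z : A(z) ≤ λ and B(z) ≤ A(z) f(A(z))}} λ·(λ² + B(z)²)^{-1} g(z) dz ) dλ ≤ (π/2) ∫_{ℝⁿ} A(z)·B(z)^{-2}·g(z) dz. -/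
open MeasureTheory

theorem aux_int (b : ℝ) (hb : 0 < b) (c : ℝ) (hc : 0 ≤ c) :
    ∫⁻ l in Set.Ici (1 : ℝ), ENNReal.ofReal (c * (1 / (l ^ 2 + b ^ 2))) ≤
      ENNReal.ofReal (c * (Real.pi / 2 / b)) := by
  have key : ∀ l : ℝ, c * (1 / (l ^ 2 + b ^ 2)) = (c / b ^ 2) * (1 + (b⁻¹ * l) ^ 2)⁻¹ := by
    intro l
    have : l ^ 2 + b ^ 2 ≠ 0 := by positivity
    have h2 : 1 + (b⁻¹ * l) ^ 2 ≠ 0 := by positivity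
    field_simp
    ring
  calc ∫⁻ l in Set.Ici (1 : ℝ), ENNReal.ofReal (c * (1 / (l ^ 2 + b ^ 2)))
      ≤ ∫⁻ l in Set.Ioi (0 : ℝ), ENNReal.ofReal (c * (1 / (l ^ 2 + b ^ 2))) :=
        lintegral_mono_set (Set.Ici_subset_Ioi.2 one_pos)
    _ = ENNReal.ofReal (∫ l in Set.Ioi (0 : ℝ), c * (1 / (l ^ 2 + b ^ 2))) := by
        rw [ofReal_integral_eq_lintegral_ofReal]
        · simp_rw [key]
          apply Integrable.const_mul
          exact (integrable_inv_one_add_sq.comp_mul_left' (inv_ne_zero hb.ne')).integrableOn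
        · exact Filter.Eventually.of_forall (fun l => by dsimp; positivity)
    _ ≤ _ := by
        apply ENNReal.ofReal_le_ofReal
        simp_rw [key]
        rw [integral_const_mul, integral_comp_mul_left_Ioi (fun x => (1 + x ^ 2)⁻¹) 0 (inv_pos.2 hb)]
        rw [mul_zero, integral_Ioi_inv_one_add_sq]
        simp
        apply le_of_eq
        field_simp

/-- The estimate in the proof of Lemma 4.2: for measurable `A, B : ℝⁿ → ℝ` with
`1 ≤ A ≤ B`, measurable `g ≥ 0`, and increasing `f : [1,∞) → (0,∞)`,
`∫₁^∞ (λ f(λ))⁻¹ (∫_{A(z)≤λ, B(z)≤A(z)f(A(z))} λ (λ²+B(z)²)⁻¹ g(z) dz) dλ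
  ≤ (π/2) ∫ A(z) B(z)⁻² g(z) dz`. -/
theorem stmt_3 (n : ℕ) (hn : 1 ≤ n)
    (A B : EuclideanSpace ℝ (Fin n) → ℝ) (hA : Measurable A) (hB : Measurable B)
    (hAB : ∀ z, 1 ≤ A z ∧ A z ≤ B z)
    (g : EuclideanSpace ℝ (Fin n) → ℝ) (hg : Measurable g) (hg0 : ∀ z, 0 ≤ g z)
    (f : ℝ → ℝ) (hf_pos : ∀ x, 1 ≤ x → 0 < f x) (hf_mono : MonotoneOn f (Set.Ici 1)) :
    ∫⁻ l in Set.Ici (1 : ℝ), ENNReal.ofReal (1 / (l * f l)) *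
        ∫⁻ z in {z | A z ≤ l ∧ B z ≤ A z * f (A z)},
          ENNReal.ofReal (l / (l ^ 2 + B z ^ 2) * g z)
      ≤ ENNReal.ofReal (Real.pi / 2) *
        ∫⁻ z, ENNReal.ofReal (A z / B z ^ 2 * g z) := by
  have hApos : ∀ z, 0 < A z := fun z => lt_of_lt_of_le one_pos (hAB z).1
  have hBpos : ∀ z, 0 < B z := fun z => lt_of_lt_of_le (hApos z) (hAB z).2
  calc _ ≤ ∫⁻ l in Set.Ici (1 : ℝ), ∫⁻ z,
          ENNReal.ofReal ((A z / B z * g z) * (1 / (l ^ 2 + B z ^ 2))) := by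
        apply setLIntegral_mono' measurableSet_Ici
        intro l hl
        have hl1 : (1 : ℝ) ≤ l := hl
        have hl0 : 0 < l := lt_of_lt_of_le one_pos hl1
        have hfl := hf_pos l hl1
        rw [← lintegral_const_mul' _ _ ENNReal.ofReal_ne_top]
        refine le_trans (setLIntegral_mono (by fun_prop) ?_) (setLIntegral_le_lintegral _ _)
        rintro z ⟨h1, h2⟩
        rw [← ENNReal.ofReal_mul (by positivity)]
        apply ENNReal.ofReal_le_ofReal
        have hA0 := hApos z
        have hB0 := hBpos z
        have hm : f (A z) ≤ f l := hf_mono (hAB z).1 hl1 h1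
        have h3 : 1 / f l ≤ A z / B z := by
          rw [div_le_div_iff₀ hfl hB0]
          nlinarith
        have e : 1 / (l * f l) * (l / (l ^ 2 + B z ^ 2) * g z)
            = (1 / f l) * (g z * (1 / (l ^ 2 + B z ^ 2))) := by
          field_simp
        rw [e, mul_assoc]
        have := hg0 z
        gcongr
    _ = ∫⁻ z, ∫⁻ l in Set.Ici (1 : ℝ),
          ENNReal.ofReal ((A z / B z * g z) * (1 / (l ^ 2 + B z ^ 2))) := by
        apply lintegral_lintegral_swap
        apply Measurable.aemeasurable
        unfold Function.uncurry
        fun_prop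
    _ ≤ ∫⁻ z, ENNReal.ofReal (Real.pi / 2) * ENNReal.ofReal (A z / B z ^ 2 * g z) := by
        apply lintegral_mono
        intro z
        have hA0 := hApos z
        have hB0 := hBpos z
        have := hg0 z
        refine le_trans (aux_int (B z) hB0 _ (by positivity)) ?_
        beta_reduce
        rw [← ENNReal.ofReal_mul (by positivity)]
        apply ENNReal.ofReal_le_ofReal
        apply le_of_eq
        field_simp
    _ = _ := lintegral_const_mul' _ _ ENNReal.ofReal_ne_top
end

section
/- Let n ≥ 1, let A, B : ℝⁿ → ℝ be Borel measurable with 1 ≤ A(z) ≤ B(z) for all z, let g : ℝⁿ → [0,∞) be Borel measurable with ∫_{ℝⁿ} A(z) B(z)^{-2} g(z) dz < ∞, and let f : [1,∞) → (0,∞) be increasing with ∫₁^∞ (λ f(λ))^{-1} dλ = ∞. Suppose that the limit L := lim_{λ→∞} ∫_{{z : A(z) ≤ λ}} λ·(λ² + B(z)²)^{-1} g(z) dz exists in ℝ, and that lim_{λ→∞} ∫_{{z : A(z) ≤ λ and B(z) > A(z) f(A(z))}} λ·(λ² + B(z)²)^{-1} g(z) dz = 0. Then L = 0. -/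
open MeasureTheory Filter

open scoped ENNReal

lemma aux_cauchy (b : ℝ) (hb : 0 < b) :
    ∫⁻ l : ℝ, ENNReal.ofReal (1 / (l ^ 2 + b ^ 2)) = ENNReal.ofReal (Real.pi / b) := by
  have hi : Integrable (fun l : ℝ => b⁻¹ ^ 2 * (1 + (l / b) ^ 2)⁻¹) :=
    (integrable_inv_one_add_sq.comp_div hb.ne').const_mul _
  have he : ∀ l : ℝ, 1 / (l ^ 2 + b ^ 2) = b⁻¹ ^ 2 * (1 + (l / b) ^ 2)⁻¹ := by
    intro l
    have : l ^ 2 + b ^ 2 ≠ 0 := by positivity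
    have h2 : 1 + (l / b) ^ 2 ≠ 0 := by positivity
    rw [eq_comm, eq_div_iff this]
    field_simp
    ring
  simp_rw [he]
  rw [← ofReal_integral_eq_lintegral_ofReal hi (Eventually.of_forall fun l => by positivity)]
  rw [integral_const_mul, Measure.integral_comp_div (fun x : ℝ => (1 + x ^ 2)⁻¹),
    integral_univ_inv_one_add_sq, abs_of_pos hb, smul_eq_mul]
  congr 1
  field_simp

/-- The step (H21) ⟹ (gap) in the proof of Lemma 4.2: with `1 ≤ A ≤ B`,
`g ≥ 0`, `∫ A B⁻² g < ∞` and `f` increasing with `∫₁^∞ (λ f(λ))⁻¹ dλ = ∞`,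
if the limit `L` of `∫_{A≤λ} λ (λ²+B²)⁻¹ g dz` exists in `ℝ` and the
corresponding integral over `{A ≤ λ, B > A f(A)}` tends to `0`, then `L = 0`. -/
theorem stmt_4 (n : ℕ) (hn : 1 ≤ n)
    (A B : EuclideanSpace ℝ (Fin n) → ℝ) (hA : Measurable A) (hB : Measurable B)
    (hAB : ∀ z, 1 ≤ A z ∧ A z ≤ B z)
    (g : EuclideanSpace ℝ (Fin n) → ℝ) (hg : Measurable g) (hg0 : ∀ z, 0 ≤ g z)
    (hfin : ∫⁻ z, ENNReal.ofReal (A z / B z ^ 2 * g z) < ⊤)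
    (f : ℝ → ℝ) (hf_pos : ∀ x, 1 ≤ x → 0 < f x) (hf_mono : MonotoneOn f (Set.Ici 1))
    (hf_div : ∫⁻ l in Set.Ici (1 : ℝ), ENNReal.ofReal (1 / (l * f l)) = ⊤)
    (L : ℝ≥0∞) (hLfin : L ≠ ⊤)
    (hL : Tendsto (fun l : ℝ => ∫⁻ z in {z | A z ≤ l},
        ENNReal.ofReal (l / (l ^ 2 + B z ^ 2) * g z)) atTop (nhds L))
    (h0 : Tendsto (fun l : ℝ => ∫⁻ z in {z | A z ≤ l ∧ A z * f (A z) < B z},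
        ENNReal.ofReal (l / (l ^ 2 + B z ^ 2) * g z)) atTop (nhds 0)) :
    L = 0 := by
  by_contra hL0
  set p : ℝ → ℝ := fun x => f (max x 1) with hp
  have hpm : Measurable p := by
    refine Monotone.measurable fun x y hxy => ?_
    exact hf_mono (Set.mem_Ici.2 (le_max_right _ _)) (Set.mem_Ici.2 (le_max_right _ _)) (max_le_max_right 1 hxy)
  have hpf : ∀ x, 1 ≤ x → p x = f x := fun x hx => by simp [hp, hx]
  set K : ℝ → EuclideanSpace ℝ (Fin n) → ℝ≥0∞ := fun l z =>
    Set.indicator {q : ℝ × EuclideanSpace ℝ (Fin n) | A q.2 ≤ q.1 ∧ B q.2 ≤ A q.2 * p (A q.2)}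
      (fun q => ENNReal.ofReal (1 / (q.1 * p q.1)) *
        ENNReal.ofReal (q.1 / (q.1 ^ 2 + B q.2 ^ 2) * g q.2)) (l, z) with hK
  have hKm : Measurable (Function.uncurry K) := by
    have hS : MeasurableSet {q : ℝ × EuclideanSpace ℝ (Fin n) |
        A q.2 ≤ q.1 ∧ B q.2 ≤ A q.2 * p (A q.2)} := by
      rw [Set.ofPred_and]
      apply MeasurableSet.inter
      · exact measurableSet_le (by fun_prop) (by fun_prop)
      · exact measurableSet_le (by fun_prop) (by fun_prop)
    exact Measurable.indicator (by fun_prop) hS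
  -- upper bound
  have hup : ∫⁻ l in Set.Ici (1 : ℝ), ∫⁻ z, K l z < ⊤ := by
    rw [lintegral_lintegral_swap hKm.aemeasurable]
    refine lt_of_le_of_lt (b := ∫⁻ z, ENNReal.ofReal Real.pi *
      ENNReal.ofReal (A z / B z ^ 2 * g z)) ?_ ?_
    · refine lintegral_mono fun z => ?_
      obtain ⟨h1, h2⟩ := hAB z
      have hBp : 0 < B z := by linarith
      have hAp : 0 < A z := by linarith
      have hg' := hg0 z
      refine (lintegral_mono (μ := volume.restrict (Set.Ici (1:ℝ)))
        (g := fun l => ENNReal.ofReal (A z / B z * g z) *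
          ENNReal.ofReal (1 / (l ^ 2 + B z ^ 2))) fun l => ?_).trans ?_
      · simp only [hK, Set.indicator, Set.mem_ofPred_eq]
        split_ifs with h
        · obtain ⟨h3, h4⟩ := h
          have hl : 1 ≤ l := by linarith
          have hl0 : 0 < l := by linarith
          rw [hpf _ h1] at h4
          rw [hpf _ hl]
          have h5 : f (A z) ≤ f l := hf_mono h1 hl h3
          have hfl := hf_pos l hl
          rw [← ENNReal.ofReal_mul (by positivity), ← ENNReal.ofReal_mul (by positivity)]
          apply ENNReal.ofReal_le_ofReal
          have h6 : 1 / f l ≤ A z / B z := by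
            rw [div_le_div_iff₀ hfl hBp]
            nlinarith [mul_le_mul_of_nonneg_left h5 hAp.le]
          have : 1 / (l * f l) * (l / (l ^ 2 + B z ^ 2) * g z)
              = 1 / f l * (g z * (1 / (l ^ 2 + B z ^ 2))) := by
            field_simp
          rw [this, mul_assoc]
          exact mul_le_mul_of_nonneg_right h6 (by positivity)
        · exact zero_le
      · refine (setLIntegral_le_lintegral _ _).trans ?_
        rw [lintegral_const_mul _ (by fun_prop), aux_cauchy _ hBp,
          ← ENNReal.ofReal_mul (by positivity), ← ENNReal.ofReal_mul (by positivity)]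
        apply ENNReal.ofReal_le_ofReal
        apply le_of_eq
        field_simp
    · rw [lintegral_const_mul _ (by fun_prop)]
      exact ENNReal.mul_lt_top ENNReal.ofReal_lt_top hfin
  -- lower bound
  have hhalf : L / 2 < L := ENNReal.half_lt_self hL0 hLfin
  set c := L / 2 / 2 with hc
  have hc0 : c ≠ 0 := by simp [hc, hL0]
  have hcc : c + c = L / 2 := ENNReal.add_halves _
  have e1 := hL.eventually (lt_mem_nhds hhalf)
  have e2 := h0.eventually (gt_mem_nhds (pos_iff_ne_zero.mpr hc0))
  obtain ⟨M, hM⟩ := eventually_atTop.1 ((e1.and e2).and (eventually_ge_atTop 1))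
  have hM1 : 1 ≤ M := (hM M le_rfl).2
  have hlow : ∀ l, M ≤ l → c * ENNReal.ofReal (1 / (l * f l)) ≤ ∫⁻ z, K l z := by
    intro l hl
    obtain ⟨⟨a1, a2⟩, a3⟩ := hM l hl
    have hS : MeasurableSet {z | A z ≤ l ∧ B z ≤ A z * p (A z)} := by
      rw [Set.ofPred_and]
      apply MeasurableSet.inter
      · exact measurableSet_le (by fun_prop) (by fun_prop)
      · exact measurableSet_le (by fun_prop) (by fun_prop)
    have hKl : ∫⁻ z, K l z = ENNReal.ofReal (1 / (l * f l)) *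
        ∫⁻ z in {z | A z ≤ l ∧ B z ≤ A z * p (A z)},
          ENNReal.ofReal (l / (l ^ 2 + B z ^ 2) * g z) := by
      rw [← lintegral_const_mul _ (by fun_prop), ← lintegral_indicator hS]
      refine lintegral_congr fun z => ?_
      simp only [hK, Set.indicator, Set.mem_ofPred_eq, hpf l a3]
    rw [hKl, mul_comm]
    gcongr
    by_contra! hlt
    have hsub : {z | A z ≤ l} ⊆ {z | A z ≤ l ∧ A z * f (A z) < B z} ∪
        {z | A z ≤ l ∧ B z ≤ A z * p (A z)} := by
      intro z hz
      rcases lt_or_ge (A z * f (A z)) (B z) with h | h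
      · exact Or.inl ⟨hz, h⟩
      · exact Or.inr ⟨hz, by rwa [hpf _ (hAB z).1]⟩
    have := (lintegral_mono_set (μ := volume)
      (f := fun z => ENNReal.ofReal (l / (l ^ 2 + B z ^ 2) * g z)) hsub).trans
        (lintegral_union_le _ _ _)
    have h3 := a1.trans_le (this.trans (add_le_add a2.le hlt.le))
    exact absurd hcc h3.ne'
  have htail : ∫⁻ l in Set.Ici M, ENNReal.ofReal (1 / (l * f l)) = ⊤ := by
    by_contra hne
    have hsub : Set.Ici (1:ℝ) ⊆ Set.Icc 1 M ∪ Set.Ici M := by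
      intro x hx
      rcases le_total x M with h | h
      · exact Or.inl ⟨hx, h⟩
      · exact Or.inr h
    have h1 := (lintegral_mono_set (μ := volume)
      (f := fun l : ℝ => ENNReal.ofReal (1 / (l * f l))) hsub).trans
        (lintegral_union_le _ _ _)
    rw [hf_div, top_le_iff, ENNReal.add_eq_top] at h1
    rcases h1 with h1 | h1
    · have : ∫⁻ l in Set.Icc 1 M, ENNReal.ofReal (1 / (l * f l)) ≤
          ∫⁻ l in Set.Icc 1 M, ENNReal.ofReal (1 / f 1) := by
        refine setLIntegral_mono' measurableSet_Icc fun l hl => ?_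
        apply ENNReal.ofReal_le_ofReal
        have hf1 := hf_pos 1 le_rfl
        have := hf_mono (Set.mem_Ici.2 le_rfl) (Set.mem_Ici.2 hl.1) hl.1
        apply one_div_le_one_div_of_le hf1
        nlinarith [hl.1]
      rw [h1, setLIntegral_const, top_le_iff, Real.volume_Icc] at this
      exact ENNReal.mul_ne_top ENNReal.ofReal_ne_top ENNReal.ofReal_ne_top this
    · exact hne h1
  refine hup.ne (top_le_iff.1 ?_)
  calc (⊤ : ℝ≥0∞) = c * ∫⁻ l in Set.Ici M, ENNReal.ofReal (1 / (l * f l)) := by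
        rw [htail, ENNReal.mul_top hc0]
    _ ≤ ∫⁻ l in Set.Ici M, c * ENNReal.ofReal (1 / (l * f l)) := lintegral_const_mul_le _ _
    _ ≤ ∫⁻ l in Set.Ici M, ∫⁻ z, K l z :=
        setLIntegral_mono' measurableSet_Ici fun l hl => hlow l hl
    _ ≤ _ := lintegral_mono_set (Set.Ici_subset_Ici.2 hM1)
end

section
/- Let n ≥ 1, let A, I : ℝⁿ → ℝ be Borel measurable with A(z) ≥ 1 for all z, set B(z) := √(A(z)² + I(z)²), and let g : ℝⁿ → [0,∞) be Borel measurable with ∫_{ℝⁿ} A(z) B(z)^{-2} g(z) dz < ∞. Then lim_{λ→∞} Σ_{k=1}^∞ ∫_{{z : B(z) > √2·A(z), k ≤ |I(z)|/A(z) < k+1, and λ ≥ (k+1)|I(z)|}} λ·(λ² + I(z)²)^{-1} g(z) dz = 0. -/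
open MeasureTheory Filter

open scoped ENNReal

/-- The dominated-convergence step in the proof of Lemma 4.2: with `A ≥ 1`,
`B := √(A² + I²)` and `g ≥ 0` satisfying `∫ A B⁻² g < ∞`, one has
`lim_{λ→∞} Σ_{k≥1} ∫_{B > √2 A, k ≤ |I|/A < k+1, λ ≥ (k+1)|I|}
  λ (λ² + I²)⁻¹ g dz = 0`. -/
theorem stmt_5 (n : ℕ) (hn : 1 ≤ n)
    (A I : EuclideanSpace ℝ (Fin n) → ℝ) (hA : Measurable A) (hI : Measurable I)
    (hA1 : ∀ z, 1 ≤ A z)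
    (B : EuclideanSpace ℝ (Fin n) → ℝ)
    (hB : ∀ z, B z = Real.sqrt (A z ^ 2 + I z ^ 2))
    (g : EuclideanSpace ℝ (Fin n) → ℝ) (hg : Measurable g) (hg0 : ∀ z, 0 ≤ g z)
    (hfin : ∫⁻ z, ENNReal.ofReal (A z / B z ^ 2 * g z) < ⊤) :
    Tendsto (fun l : ℝ => ∑' k : ℕ,
        ∫⁻ z in {z | Real.sqrt 2 * A z < B z ∧
            ((k : ℝ) + 1) ≤ |I z| / A z ∧ |I z| / A z < (k : ℝ) + 2 ∧
            ((k : ℝ) + 2) * |I z| ≤ l},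
          ENNReal.ofReal (l / (l ^ 2 + I z ^ 2) * g z))
      atTop (nhds 0) := by
  have hmeas : ∀ (l : ℝ) (k : ℕ), MeasurableSet {z | Real.sqrt 2 * A z < B z ∧
            ((k : ℝ) + 1) ≤ |I z| / A z ∧ |I z| / A z < (k : ℝ) + 2 ∧
            ((k : ℝ) + 2) * |I z| ≤ l} := by
    intro l k
    have hBm : Measurable B := by
      have : B = fun z => Real.sqrt (A z ^ 2 + I z ^ 2) := funext hB
      rw [this]; fun_prop
    have hIa : Measurable (fun z => |I z|) := by
      simpa [Real.norm_eq_abs] using hI.norm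
    have hq : Measurable (fun z => |I z| / A z) := hIa.div hA
    refine (measurableSet_lt (hA.const_mul _) hBm).inter
      ((measurableSet_le measurable_const hq).inter
      ((measurableSet_lt hq measurable_const).inter
      (measurableSet_le (hIa.const_mul _) measurable_const)))
  have hFm : ∀ l : ℝ, Measurable (fun z => ENNReal.ofReal (l / (l ^ 2 + I z ^ 2) * g z)) := by
    intro l; fun_prop
  have hdisj : ∀ l : ℝ, Pairwise (Function.onFun Disjoint
      (fun k : ℕ => {z | Real.sqrt 2 * A z < B z ∧
            ((k : ℝ) + 1) ≤ |I z| / A z ∧ |I z| / A z < (k : ℝ) + 2 ∧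
            ((k : ℝ) + 2) * |I z| ≤ l})) := by
    intro l j k hjk
    refine Set.disjoint_left.2 ?_
    rintro z ⟨-, h1, h2, -⟩ ⟨-, h3, h4, -⟩
    apply hjk
    have a1 : (j : ℝ) < k + 1 := by linarith
    have a2 : (k : ℝ) < j + 1 := by linarith
    have b1 : j < k + 1 := by exact_mod_cast a1
    have b2 : k < j + 1 := by exact_mod_cast a2
    omega
  have key : ∀ l : ℝ, (∑' k : ℕ,
        ∫⁻ z in {z | Real.sqrt 2 * A z < B z ∧
            ((k : ℝ) + 1) ≤ |I z| / A z ∧ |I z| / A z < (k : ℝ) + 2 ∧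
            ((k : ℝ) + 2) * |I z| ≤ l},
          ENNReal.ofReal (l / (l ^ 2 + I z ^ 2) * g z)) =
      ∫⁻ z, (⋃ k : ℕ, {z | Real.sqrt 2 * A z < B z ∧
            ((k : ℝ) + 1) ≤ |I z| / A z ∧ |I z| / A z < (k : ℝ) + 2 ∧
            ((k : ℝ) + 2) * |I z| ≤ l}).indicator
          (fun z => ENNReal.ofReal (l / (l ^ 2 + I z ^ 2) * g z)) z := by
    intro l
    rw [lintegral_indicator (MeasurableSet.iUnion (hmeas l)),
      lintegral_iUnion (hmeas l) (hdisj l)]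
  simp_rw [key]
  rw [show (0 : ℝ≥0∞) = ∫⁻ _ : EuclideanSpace ℝ (Fin n), 0 by simp]
  refine tendsto_lintegral_filter_of_dominated_convergence
    (fun z => 2 * ENNReal.ofReal (A z / B z ^ 2 * g z)) ?_ ?_ ?_ ?_
  · exact Eventually.of_forall fun l => (hFm l).indicator (MeasurableSet.iUnion (hmeas l))
  · refine Eventually.of_forall fun l => Eventually.of_forall fun z => ?_
    refine Set.indicator_apply_le' ?_ (fun _ => zero_le)
    intro hz
    obtain ⟨k, -, h1, h2, h3⟩ := Set.mem_iUnion.1 hz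
    have hApos : 0 < A z := by linarith [hA1 z]
    have hB2 : B z ^ 2 = A z ^ 2 + I z ^ 2 := by
      rw [hB, Real.sq_sqrt (by positivity)]
    have hk : (0 : ℝ) ≤ k := Nat.cast_nonneg k
    rw [le_div_iff₀ hApos] at h1
    rw [div_lt_iff₀ hApos] at h2
    have hIA : A z ≤ |I z| := by nlinarith
    have hIpos : 0 < |I z| := by linarith
    have hl : 0 < l := lt_of_lt_of_le (by positivity) h3
    rw [show (2 : ℝ≥0∞) = ENNReal.ofReal 2 by simp, ← ENNReal.ofReal_mul (by norm_num), ← mul_assoc]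
    refine ENNReal.ofReal_le_ofReal (mul_le_mul_of_nonneg_right ?_ (hg0 z))
    rw [hB2, ← sq_abs (I z)]
    generalize |I z| = J at *
    rw [← mul_div_assoc, div_le_div_iff₀ (by positivity) (by positivity)]
    have e1 : J ^ 2 ≤ A z * l := by
      calc J ^ 2 = J * J := sq J
        _ ≤ ((k + 2) * A z) * J := by gcongr
        _ = A z * ((k + 2) * J) := by ring
        _ ≤ A z * l := by gcongr
    have e2 : A z ^ 2 ≤ J ^ 2 := by gcongr
    have e3 : l * (A z ^ 2 + J ^ 2) ≤ l * (2 * (A z * l)) := by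
      gcongr; linarith
    have e4 : 0 ≤ 2 * A z * J ^ 2 := by positivity
    nlinarith
  · rw [lintegral_const_mul' _ _ (by simp)]
    exact ENNReal.mul_ne_top (by simp) hfin.ne
  · refine Eventually.of_forall fun z => ?_
    have hlim : Tendsto (fun l : ℝ => ENNReal.ofReal (l⁻¹ * g z)) atTop (nhds 0) := by
      have := ENNReal.tendsto_ofReal (tendsto_inv_atTop_zero.mul_const (g z) (M := ℝ))
      simpa using this
    refine tendsto_of_tendsto_of_tendsto_of_le_of_le' tendsto_const_nhds hlim
      (Eventually.of_forall fun l => zero_le) ?_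
    filter_upwards [eventually_gt_atTop (0 : ℝ)] with l hl
    refine (Set.indicator_le_self _ _ z).trans ?_
    refine ENNReal.ofReal_le_ofReal (mul_le_mul_of_nonneg_right ?_ (hg0 z))
    rw [inv_eq_one_div, div_le_div_iff₀ (by positivity) hl]
    nlinarith [sq_nonneg (I z)]
end

section
/- Let α ∈ (0,1), δ > 0, c₁ > 0, and let μ be a Borel measure on (0,∞) such that μ ≥ c₁·x^{−1−α}dx on (0,δ). Then there exist constants c′ > 0 and K > 0 such that for all z ∈ ℝ: ∫_{(0,∞)} (1 − cos(zx)) μ(dx) ≥ c′|z|^α − K. -/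
open MeasureTheory

/-- Lower bound (pro5.4-a) on the real part of the Lévy–Khintchine exponent of a
locally quasi-stable subordinator: if `μ ≥ c₁ x^{-1-α} dx` on `(0,δ)`, then there
are `c' > 0`, `K > 0` with `∫_{(0,∞)} (1 - cos(z x)) μ(dx) ≥ c' |z|^α - K` for all `z`. -/
theorem stmt_8 (α δ c₁ : ℝ) (hα : α ∈ Set.Ioo (0 : ℝ) 1) (hδ : 0 < δ) (hc₁ : 0 < c₁)
    (μ : Measure ℝ)
    (hdom : ∀ E : Set ℝ, MeasurableSet E → E ⊆ Set.Ioo 0 δ →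
      ∫⁻ x in E, ENNReal.ofReal (c₁ * x ^ (-1 - α)) ≤ μ E) :
    ∃ c' > (0 : ℝ), ∃ K > (0 : ℝ), ∀ z : ℝ,
      ENNReal.ofReal (c' * |z| ^ α - K)
        ≤ ∫⁻ x in Set.Ioi (0 : ℝ), ENNReal.ofReal (1 - Real.cos (z * x)) ∂μ := by
  obtain ⟨hα0, hα1⟩ := hα
  have hm : 0 < 1 - Real.cos (1 / 2) := by
    have h := Real.cos_lt_cos_of_nonneg_of_le_pi (x := 0) (y := 1 / 2) le_rfl
      (by linarith [Real.pi_gt_three]) (by norm_num)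
    rw [Real.cos_zero] at h
    linarith
  set m : ℝ := 1 - Real.cos (1 / 2) with hmdef
  have hc' : 0 < m * (c₁ / 2) := by positivity
  have hK : 0 < m * (c₁ / 2) * (1 / δ) ^ α := by positivity
  refine ⟨m * (c₁ / 2), hc', m * (c₁ / 2) * (1 / δ) ^ α, hK, fun z => ?_⟩
  rcases le_or_gt |z| (1 / δ) with hz | hz
  · have h1 : |z| ^ α ≤ (1 / δ) ^ α := Real.rpow_le_rpow (abs_nonneg z) hz hα0.le
    rw [ENNReal.ofReal_of_nonpos (by nlinarith)]
    exact zero_le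
  · have hw : 0 < |z| := lt_trans (by positivity) hz
    set w : ℝ := |z| with hwdef
    have hcos : ∀ x, Real.cos (z * x) = Real.cos (w * x) := by
      intro x
      rcases abs_choice z with h | h
      · rw [hwdef, h]
      · rw [hwdef, h, neg_mul, Real.cos_neg]
    have hwd : 1 / w < δ := by
      rw [div_lt_iff₀ hδ] at hz
      rw [div_lt_iff₀ hw]
      linarith
    set E : Set ℝ := Set.Ioo (1 / (2 * w)) (1 / w) with hE
    have hEpos : ∀ x ∈ E, 0 < x := fun x hx => lt_trans (by positivity) hx.1
    have hEsub : E ⊆ Set.Ioo 0 δ := fun x hx => ⟨hEpos x hx, hx.2.trans hwd⟩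
    have hEm : MeasurableSet E := measurableSet_Ioo
    have hvol : volume E = ENNReal.ofReal (1 / (2 * w)) := by
      rw [hE, Real.volume_Ioo]
      congr 1
      field_simp
      norm_num
    have hμ : ENNReal.ofReal (c₁ / 2 * w ^ α) ≤ μ E := by
      refine le_trans ?_ (hdom E hEm hEsub)
      calc ENNReal.ofReal (c₁ / 2 * w ^ α)
          = ∫⁻ x in E, ENNReal.ofReal (c₁ * w ^ (1 + α)) := by
            rw [setLIntegral_const, hvol, ← ENNReal.ofReal_mul (by positivity)]
            congr 1
            rw [Real.rpow_add hw, Real.rpow_one]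
            field_simp
        _ ≤ _ := by
            refine setLIntegral_mono' hEm fun x hx => ENNReal.ofReal_le_ofReal ?_
            have hx0 := hEpos x hx
            refine mul_le_mul_of_nonneg_left ?_ hc₁.le
            have h2 : w ≤ x⁻¹ := by
              have := hx.2
              rw [lt_div_iff₀ hw] at this
              rw [← one_div, le_div_iff₀ hx0]
              linarith
            have h3 : x ^ (-1 - α) = x⁻¹ ^ (1 + α) := by
              rw [Real.inv_rpow hx0.le, ← Real.rpow_neg hx0.le]
              congr 1
              ring
            rw [h3]
            exact Real.rpow_le_rpow hw.le h2 (by linarith)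
    calc ENNReal.ofReal (m * (c₁ / 2) * w ^ α - m * (c₁ / 2) * (1 / δ) ^ α)
        ≤ ENNReal.ofReal (m * (c₁ / 2 * w ^ α)) :=
          ENNReal.ofReal_le_ofReal (by linarith)
      _ = ENNReal.ofReal m * ENNReal.ofReal (c₁ / 2 * w ^ α) :=
          ENNReal.ofReal_mul hm.le
      _ ≤ ENNReal.ofReal m * μ E := by gcongr
      _ = ∫⁻ x in E, ENNReal.ofReal m ∂μ := (setLIntegral_const _ _).symm
      _ ≤ ∫⁻ x in E, ENNReal.ofReal (1 - Real.cos (z * x)) ∂μ := by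
          refine setLIntegral_mono' hEm fun x hx => ENNReal.ofReal_le_ofReal ?_
          have h1 := hx.1
          have h2 := hx.2
          rw [lt_div_iff₀ hw] at h2
          rw [div_lt_iff₀ (by positivity)] at h1
          have h := Real.cos_le_cos_of_nonneg_of_le_pi (x := 1 / 2) (y := w * x) (by norm_num)
            (by linarith [Real.pi_gt_three]) (by linarith)
          rw [hcos x]
          linarith
      _ ≤ _ := lintegral_mono_set fun x hx => hEpos x hx
end

section
/- Let α ∈ (0,1), δ > 0, c₂ > 0, let μ₂ be a finite Borel measure on (0,δ), and let μ be a Borel measure on (0,∞) with μ([δ,∞)) < ∞ and μ ≤ c₂·x^{−1−α}dx + μ₂ on (0,δ). Then there exist constants c″ > 0 and K > 0 such that for all z ∈ ℝ: ∫_{(0,∞)} |sin(zx)| μ(dx) ≤ c″|z|^α + K. -/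
open MeasureTheory

theorem aux_main (α c₂ : ℝ) (h0 : 0 < α) (h1 : α < 1) (hc₂ : 0 < c₂) (z : ℝ) (hz : z ≠ 0) :
    ∫⁻ x in Set.Ioi (0 : ℝ), ENNReal.ofReal (c₂ * x ^ (-1 - α)) * ENNReal.ofReal |Real.sin (z * x)|
      ≤ ENNReal.ofReal (c₂ * (1 / (1 - α) + 1 / α) * |z| ^ α) := by
  have ha : 0 < |z| := abs_pos.mpr hz
  set a := |z| with hadef
  have hb : 0 < 1 / a := by positivity
  have hsplit : Set.Ioi (0:ℝ) = Set.Ioc 0 (1 / a) ∪ Set.Ioi (1 / a) :=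
    (Set.Ioc_union_Ioi_eq_Ioi hb.le).symm
  have hpow : ∀ s : ℝ, (1 / a) ^ s = a ^ (-s) := by
    intro s
    rw [one_div, Real.inv_rpow ha.le, Real.rpow_neg ha.le]
  have e1 : ∫⁻ x in Set.Ioc 0 (1 / a),
      ENNReal.ofReal (c₂ * x ^ (-1 - α)) * ENNReal.ofReal |Real.sin (z * x)|
      ≤ ENNReal.ofReal (c₂ * (1 / (1 - α)) * a ^ α) := by
    have hint : IntegrableOn (fun x : ℝ => c₂ * a * x ^ (-α)) (Set.Ioc 0 (1 / a)) := by
      have := (intervalIntegral.intervalIntegrable_rpow' (a := 0) (b := 1 / a) (r := -α)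
        (by linarith)).const_mul (c₂ * a)
      exact (intervalIntegrable_iff_integrableOn_Ioc_of_le hb.le).1 this
    calc _ ≤ ∫⁻ x in Set.Ioc 0 (1 / a), ENNReal.ofReal (c₂ * a * x ^ (-α)) := by
          refine setLIntegral_mono' measurableSet_Ioc fun x hx => ?_
          have hx0 : 0 < x := hx.1
          rw [← ENNReal.ofReal_mul (by positivity)]
          apply ENNReal.ofReal_le_ofReal
          have hs : |Real.sin (z * x)| ≤ a * x := by
            refine Real.abs_sin_le_abs.trans ?_
            rw [abs_mul, abs_of_pos hx0]
          have hx1 : x ^ (-α) = x ^ (-1 - α) * x := by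
            rw [← Real.rpow_add_one hx0.ne']; congr 1; ring
          rw [hx1]
          calc _ ≤ c₂ * x ^ (-1 - α) * (a * x) := by gcongr
            _ = _ := by ring
      _ = ENNReal.ofReal (∫ x in Set.Ioc 0 (1 / a), c₂ * a * x ^ (-α)) := by
          rw [ofReal_integral_eq_lintegral_ofReal hint]
          refine (ae_restrict_iff' measurableSet_Ioc).2 (ae_of_all _ fun x hx => ?_)
          have hx0 : 0 < x := hx.1
          simp only [Pi.zero_apply]; positivity
      _ = _ := by
          congr 1
          rw [← intervalIntegral.integral_of_le hb.le, intervalIntegral.integral_const_mul,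
            integral_rpow (Or.inl (by linarith)), Real.zero_rpow (by linarith), hpow]
          have : a ^ α = a * a ^ (-(-α + 1)) := by
            rw [mul_comm, ← Real.rpow_add_one ha.ne']; congr 1; ring
          rw [this, show -α + 1 = 1 - α by ring]
          ring
  have e2 : ∫⁻ x in Set.Ioi (1 / a),
      ENNReal.ofReal (c₂ * x ^ (-1 - α)) * ENNReal.ofReal |Real.sin (z * x)|
      ≤ ENNReal.ofReal (c₂ * (1 / α) * a ^ α) := by
    have hint : IntegrableOn (fun x : ℝ => c₂ * x ^ (-1 - α)) (Set.Ioi (1 / a)) :=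
      (integrableOn_Ioi_rpow_of_lt (by linarith) hb).const_mul c₂
    calc _ ≤ ∫⁻ x in Set.Ioi (1 / a), ENNReal.ofReal (c₂ * x ^ (-1 - α)) := by
          refine setLIntegral_mono' measurableSet_Ioi fun x hx => ?_
          refine mul_le_of_le_one_right' ?_
          rw [ENNReal.ofReal_le_one]
          exact Real.abs_sin_le_one _
      _ = ENNReal.ofReal (∫ x in Set.Ioi (1 / a), c₂ * x ^ (-1 - α)) := by
          rw [ofReal_integral_eq_lintegral_ofReal hint]
          refine (ae_restrict_iff' measurableSet_Ioi).2 (ae_of_all _ fun x hx => ?_)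
          have hx0 : 0 < x := hb.trans hx
          simp only [Pi.zero_apply]; positivity
      _ = _ := by
          congr 1
          rw [integral_const_mul, integral_Ioi_rpow_of_lt (by linarith) hb, hpow,
            show -(-1 - α + 1) = α by ring, show -1 - α + 1 = -α by ring, neg_div_neg_eq]
          ring
  have h1' : 0 < 1 - α := by linarith
  rw [hsplit]
  refine (lintegral_union_le _ _ _).trans ((add_le_add e1 e2).trans ?_)
  rw [← ENNReal.ofReal_add (by positivity) (by positivity)]
  apply le_of_eq
  congr 1
  ring

/-- Upper bound (pro5.4-b) on the imaginary part of the Lévy–Khintchine exponent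
of a locally quasi-stable subordinator: if `μ([δ,∞)) < ∞` and
`μ ≤ c₂ x^{-1-α} dx + μ₂` on `(0,δ)` with `μ₂` a finite measure on `(0,δ)`, then
there are `c'' > 0`, `K > 0` with
`∫_{(0,∞)} |sin(z x)| μ(dx) ≤ c'' |z|^α + K` for all `z`. -/
theorem stmt_9 (α δ c₂ : ℝ) (hα : α ∈ Set.Ioo (0 : ℝ) 1) (hδ : 0 < δ) (hc₂ : 0 < c₂)
    (μ μ₂ : Measure ℝ) [IsFiniteMeasure μ₂] (hμ₂supp : μ₂ (Set.Ioo 0 δ)ᶜ = 0)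
    (hfin : μ (Set.Ici δ) < ⊤)
    (hdom : ∀ E : Set ℝ, MeasurableSet E → E ⊆ Set.Ioo 0 δ →
      μ E ≤ (∫⁻ x in E, ENNReal.ofReal (c₂ * x ^ (-1 - α))) + μ₂ E) :
    ∃ c'' > (0 : ℝ), ∃ K > (0 : ℝ), ∀ z : ℝ,
      ∫⁻ x in Set.Ioi (0 : ℝ), ENNReal.ofReal |Real.sin (z * x)| ∂μ
        ≤ ENNReal.ofReal (c'' * |z| ^ α + K) := by
  obtain ⟨h0, h1⟩ := hα
  have h1' : 0 < 1 - α := by linarith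
  have hC : 0 < c₂ * (1 / (1 - α) + 1 / α) := by positivity
  refine ⟨_, hC, (μ₂ Set.univ).toReal + (μ (Set.Ici δ)).toReal + 1, by positivity, fun z => ?_⟩
  by_cases hz : z = 0
  · simp [hz]
  have hs : ∀ x : ℝ, ENNReal.ofReal |Real.sin (z * x)| ≤ 1 := fun x => by
    rw [ENNReal.ofReal_le_one]; exact Real.abs_sin_le_one _
  have hm : Measurable fun x : ℝ => ENNReal.ofReal (c₂ * x ^ (-1 - α)) := by fun_prop
  have hm2 : Measurable fun x : ℝ => ENNReal.ofReal |Real.sin (z * x)| := by fun_prop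
  have hle : μ.restrict (Set.Ioo 0 δ) ≤
      (volume.restrict (Set.Ioi 0)).withDensity (fun x : ℝ => ENNReal.ofReal (c₂ * x ^ (-1 - α)))
        + μ₂ := by
    refine Measure.le_iff.2 fun E hE => ?_
    rw [Measure.restrict_apply hE, Measure.add_apply, withDensity_apply _ hE,
      Measure.restrict_restrict hE]
    refine (hdom _ (hE.inter measurableSet_Ioo) Set.inter_subset_right).trans ?_
    refine add_le_add (lintegral_mono_set ?_) (measure_mono Set.inter_subset_left)
    exact Set.inter_subset_inter_right _ fun x hx => hx.1
  rw [← Set.Ioo_union_Ici_eq_Ioi hδ]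
  refine (lintegral_union_le _ _ _).trans ?_
  have b1 : ∫⁻ x in Set.Ioo 0 δ, ENNReal.ofReal |Real.sin (z * x)| ∂μ ≤
      ENNReal.ofReal (c₂ * (1 / (1 - α) + 1 / α) * |z| ^ α) + μ₂ Set.univ := by
    refine (lintegral_mono' hle le_rfl).trans ?_
    rw [lintegral_add_measure, lintegral_withDensity_eq_lintegral_mul _ hm hm2]
    refine add_le_add (aux_main α c₂ h0 h1 hc₂ z hz) ?_
    exact (lintegral_mono hs).trans (by simp)
  have b2 : ∫⁻ x in Set.Ici δ, ENNReal.ofReal |Real.sin (z * x)| ∂μ ≤ μ (Set.Ici δ) :=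
    (lintegral_mono hs).trans (by simp)
  refine (add_le_add b1 b2).trans ?_
  rw [ENNReal.ofReal_add (by positivity) (by positivity),
    ENNReal.ofReal_add (by positivity) (by positivity),
    ENNReal.ofReal_add (by positivity) (by positivity),
    ENNReal.ofReal_toReal (measure_ne_top _ _), ENNReal.ofReal_toReal hfin.ne, add_assoc]
  exact add_le_add le_rfl le_self_add
end

section
/- Let α ∈ (0,1), 0 < δ < 1, c₁ > 0, and let μ be a Borel measure on (0,∞) such that μ ≥ c₁·(−log x)^{-1}·x^{−1−α}dx on (0,δ). Then there exist constants c″ > 0 and K > 0 such that for all z ∈ ℝ with |z| > 1: ∫_{(0,∞)} (1 − cos(zx)) μ(dx) ≥ c″·|z|^α / log(2|z|) − K. -/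
open MeasureTheory

/-- Estimate (exm-1-a) in Subsection 3.3: if `0 < δ < 1` and
`μ ≥ c₁ (-log x)⁻¹ x^{-1-α} dx` on `(0,δ)`, then there are `c'' > 0`, `K > 0`
with `∫_{(0,∞)} (1 - cos(z x)) μ(dx) ≥ c'' |z|^α / log(2|z|) - K` for `|z| > 1`. -/
theorem stmt_10 (α δ c₁ : ℝ) (hα : α ∈ Set.Ioo (0 : ℝ) 1)
    (hδ0 : 0 < δ) (hδ1 : δ < 1) (hc₁ : 0 < c₁)
    (μ : Measure ℝ)
    (hdom : ∀ E : Set ℝ, MeasurableSet E → E ⊆ Set.Ioo 0 δ →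
      ∫⁻ x in E, ENNReal.ofReal (c₁ / ((-Real.log x) * x ^ (1 + α))) ≤ μ E) :
    ∃ c'' > (0 : ℝ), ∃ K > (0 : ℝ), ∀ z : ℝ, 1 < |z| →
      ENNReal.ofReal (c'' * |z| ^ α / Real.log (2 * |z|) - K)
        ≤ ∫⁻ x in Set.Ioi (0 : ℝ), ENNReal.ofReal (1 - Real.cos (z * x)) ∂μ := by
  obtain ⟨hα0, hα1⟩ := hα
  have hk : 0 < 1 - Real.cos (1 / 2) := by
    have := Real.cos_lt_cos_of_nonneg_of_le_pi (x := 0) (y := 1 / 2) le_rfl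
      (by linarith [Real.pi_gt_three]) (by norm_num)
    rw [Real.cos_zero] at this
    linarith
  have hl2 : 0 < Real.log 2 := Real.log_pos (by norm_num)
  have hc : 0 < (1 - Real.cos (1 / 2)) * c₁ / 2 := by positivity
  refine ⟨(1 - Real.cos (1 / 2)) * c₁ / 2, hc,
    ((1 - Real.cos (1 / 2)) * c₁ / 2) * (1 / δ) ^ α / Real.log 2, by positivity, ?_⟩
  intro z hz
  have hcos : ∀ x, Real.cos (z * x) = Real.cos (|z| * x) := by
    intro x
    rcases abs_choice z with h | h <;> rw [h]
    rw [neg_mul, Real.cos_neg]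
  simp_rw [hcos]
  generalize |z| = r at hz ⊢
  have hr : 0 < r := by linarith
  have hlog : 0 < Real.log (2 * r) := Real.log_pos (by linarith)
  generalize hkk : 1 - Real.cos (1 / 2) = k at hk hc ⊢
  rcases lt_or_ge δ (1 / r) with h | h
  · have hle : r ≤ 1 / δ := by
      rw [lt_div_iff₀ hr] at h
      rw [le_div_iff₀ hδ0]
      linarith
    have h1 : k * c₁ / 2 * r ^ α / Real.log (2 * r)
        ≤ k * c₁ / 2 * (1 / δ) ^ α / Real.log 2 := by
      have h2 : Real.log 2 ≤ Real.log (2 * r) := Real.log_le_log (by norm_num) (by linarith)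
      have h3 : r ^ α ≤ (1 / δ) ^ α := Real.rpow_le_rpow hr.le hle hα0.le
      gcongr
    rw [ENNReal.ofReal_of_nonpos (by linarith)]
    exact zero_le
  · have hsub : Set.Ioo (1 / (2 * r)) (1 / r) ⊆ Set.Ioo 0 δ := by
      rintro x ⟨hx1, hx2⟩
      have : 0 < 1 / (2 * r) := by positivity
      exact ⟨by linarith, by linarith⟩
    have hE := hdom _ (measurableSet_Ioo (a := 1 / (2 * r)) (b := 1 / r)) hsub
    have hvol : ENNReal.ofReal (c₁ / (Real.log (2 * r) * (1 / r) ^ (1 + α)))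
        * ENNReal.ofReal (1 / r - 1 / (2 * r)) ≤
        μ (Set.Ioo (1 / (2 * r)) (1 / r)) := by
      refine le_trans ?_ hE
      rw [← Real.volume_Ioo, ← setLIntegral_const]
      refine setLIntegral_mono' measurableSet_Ioo ?_
      intro x hx
      have hx0 := (hsub hx).1
      have hxl : 0 < -Real.log x := by
        have := Real.log_neg hx0 (by linarith [(hsub hx).2])
        linarith
      have hxl2 : -Real.log x ≤ Real.log (2 * r) := by
        have h5 := Real.log_le_log (by positivity) hx.1.le
        rw [one_div, Real.log_inv] at h5
        linarith
      have hp : x ^ (1 + α) ≤ (1 / r) ^ (1 + α) :=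
        Real.rpow_le_rpow hx0.le hx.2.le (by linarith)
      have : 0 < x ^ (1 + α) := Real.rpow_pos_of_pos hx0 _
      gcongr
    calc ENNReal.ofReal (k * c₁ / 2 * r ^ α / Real.log (2 * r)
            - k * c₁ / 2 * (1 / δ) ^ α / Real.log 2)
        ≤ ENNReal.ofReal (k * c₁ / 2 * r ^ α / Real.log (2 * r)) := by
          apply ENNReal.ofReal_le_ofReal
          have : 0 < k * c₁ / 2 * (1 / δ) ^ α / Real.log 2 := by positivity
          linarith
      _ = ENNReal.ofReal k * (ENNReal.ofReal (c₁ / (Real.log (2 * r) * (1 / r) ^ (1 + α)))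
            * ENNReal.ofReal (1 / r - 1 / (2 * r))) := by
          rw [← ENNReal.ofReal_mul (by positivity), ← ENNReal.ofReal_mul hk.le]
          congr 1
          rw [one_div r, Real.inv_rpow hr.le, Real.rpow_add hr, Real.rpow_one]
          have : 0 < r ^ α := Real.rpow_pos_of_pos hr _
          field_simp
          ring
      _ ≤ ENNReal.ofReal k * μ (Set.Ioo (1 / (2 * r)) (1 / r)) := by gcongr
      _ = ∫⁻ x in Set.Ioo (1 / (2 * r)) (1 / r), ENNReal.ofReal k ∂μ := by
          rw [setLIntegral_const]
      _ ≤ ∫⁻ x in Set.Ioo (1 / (2 * r)) (1 / r), ENNReal.ofReal (1 - Real.cos (r * x)) ∂μ := by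
          refine setLIntegral_mono' measurableSet_Ioo ?_
          intro x hx
          apply ENNReal.ofReal_le_ofReal
          have h6 : 1 / 2 ≤ r * x := by
            have := hx.1
            rw [div_lt_iff₀ (by positivity)] at this
            linarith
          have h7 : r * x ≤ 1 := by
            have := hx.2
            rw [lt_div_iff₀ hr] at this
            linarith
          have := Real.cos_le_cos_of_nonneg_of_le_pi (x := 1 / 2) (y := r * x) (by norm_num)
            (by linarith [Real.pi_gt_three]) h6
          linarith
      _ ≤ _ := lintegral_mono_set (fun x hx => (hsub hx).1)
end

section
/- Let α ∈ (0,1) and 0 < δ < 1. Then there exist constants C > 0 and K > 0 such that for all z ∈ ℝ with |z| > 1/δ: ∫₀^δ |sin(zx)|·(−log x)·x^{−1−α} dx ≤ C·|z|^α·log|z| + K. -/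
open MeasureTheory

lemma aux_int_s11 (a s : ℝ) (ha : 0 < a) (hs : -1 < s) :
    IntegrableOn (fun x : ℝ => x ^ s) (Set.Ioc 0 a) ∧
    ∫ x in Set.Ioc (0 : ℝ) a, x ^ s = a ^ (s + 1) / (s + 1) := by
  constructor
  · exact (intervalIntegrable_iff_integrableOn_Ioc_of_le ha.le).1
      (intervalIntegral.intervalIntegrable_rpow' hs)
  · rw [← intervalIntegral.integral_of_le ha.le, integral_rpow (Or.inl hs),
      Real.zero_rpow (by linarith), sub_zero]

/-- Estimate (exm-2-a) in Subsection 3.3: for `α ∈ (0,1)` and `0 < δ < 1`, there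
are `C > 0`, `K > 0` such that for all `z` with `|z| > 1/δ`,
`∫₀^δ |sin(z x)| (-log x) x^{-1-α} dx ≤ C |z|^α log|z| + K`. -/
theorem stmt_11 (α δ : ℝ) (hα : α ∈ Set.Ioo (0 : ℝ) 1) (hδ : δ ∈ Set.Ioo (0 : ℝ) 1) :
    ∃ C > (0 : ℝ), ∃ K > (0 : ℝ), ∀ z : ℝ, 1 / δ < |z| →
      ∫ x in Set.Ioo (0 : ℝ) δ, |Real.sin (z * x)| * (-Real.log x) * x ^ (-1 - α)
        ≤ C * |z| ^ α * Real.log |z| + K := by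
  obtain ⟨hα0, hα1⟩ := hα
  obtain ⟨hδ0, hδ1⟩ := hδ
  obtain ⟨β, hβ⟩ : ∃ β, β = (1 - α) / 2 := ⟨_, rfl⟩
  have hβ0 : 0 < β := by linarith
  have h1α : 0 < 1 - α := by linarith
  have hαβ : 0 < 1 - α - β := by linarith
  have hL : 0 < Real.log (1 / δ) := Real.log_pos (by rw [lt_div_iff₀ hδ0]; linarith)
  refine ⟨1 / (1 - α) + 1 / (β * (1 - α - β)) / Real.log (1 / δ) + 1 / α, by positivity, 1,
    one_pos, ?_⟩
  intro z hz
  obtain ⟨w, hw⟩ : ∃ w, w = |z| := ⟨_, rfl⟩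
  rw [← hw] at hz ⊢
  have hw1 : 1 < w := lt_trans (by rw [lt_div_iff₀ hδ0]; linarith) hz
  have hw0 : 0 < w := by linarith
  have hlw : Real.log (1 / δ) ≤ Real.log w := Real.log_le_log (by positivity) hz.le
  have hlw0 : 0 < Real.log w := by linarith
  have ha : 0 < w⁻¹ := by positivity
  obtain ⟨i1, e1⟩ := aux_int_s11 w⁻¹ (-α) ha (by linarith)
  obtain ⟨i2, e2⟩ := aux_int_s11 w⁻¹ (-α - β) ha (by linarith)
  have i3 : IntegrableOn (fun x : ℝ => x ^ (-1 - α)) (Set.Ioi w⁻¹) :=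
    integrableOn_Ioi_rpow_of_lt (by linarith) ha
  have e3 : ∫ x in Set.Ioi w⁻¹, x ^ (-1 - α) = -(w⁻¹) ^ (-1 - α + 1) / (-1 - α + 1) :=
    integral_Ioi_rpow_of_lt (by linarith) ha
  have j1 : IntegrableOn (fun x : ℝ => w * Real.log w * x ^ (-α) +
      w ^ (1 - β) / β * x ^ (-α - β)) (Set.Ioc 0 w⁻¹) :=
    (i1.const_mul _).add (i2.const_mul _)
  have j3 : IntegrableOn (fun x : ℝ => Real.log w * x ^ (-1 - α)) (Set.Ioi w⁻¹) :=
    i3.const_mul _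
  have k1 := (integrable_indicator_iff measurableSet_Ioc).2 j1
  have k3 := (integrable_indicator_iff measurableSet_Ioi).2 j3
  have key : ∫ x in Set.Ioo (0 : ℝ) δ, |Real.sin (z * x)| * (-Real.log x) * x ^ (-1 - α) ≤
      (∫ x in Set.Ioc 0 w⁻¹, (w * Real.log w * x ^ (-α) +
      w ^ (1 - β) / β * x ^ (-α - β))) + ∫ x in Set.Ioi w⁻¹, Real.log w * x ^ (-1 - α) := by
    rw [← integral_indicator measurableSet_Ioo, ← integral_indicator measurableSet_Ioc,
      ← integral_indicator measurableSet_Ioi, ← integral_add k1 k3]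
    have nn : ∀ x ∈ Set.Ioo (0 : ℝ) δ, 0 ≤ -Real.log x := fun x hx => by
      have := Real.log_nonpos hx.1.le (by linarith [hx.2]); linarith
    apply integral_mono_of_nonneg
    · refine Filter.Eventually.of_forall fun x => ?_
      apply Set.indicator_nonneg
      intro x hx
      have := nn x hx
      have := Real.rpow_nonneg hx.1.le (-1 - α)
      positivity
    · exact k1.add k3
    · refine Filter.Eventually.of_forall fun x => ?_
      have g1 : ∀ x ∈ Set.Ioc 0 w⁻¹, 0 ≤ w * Real.log w * x ^ (-α) +
          w ^ (1 - β) / β * x ^ (-α - β) := fun x hx => by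
        have := hx.1
        positivity
      have g3 : ∀ x ∈ Set.Ioi w⁻¹, 0 ≤ Real.log w * x ^ (-1 - α) := fun x hx => by
        have : 0 < x := ha.trans hx
        positivity
      have n1 := Set.indicator_nonneg g1 x
      have n3 := Set.indicator_nonneg g3 x
      by_cases hx : x ∈ Set.Ioo (0 : ℝ) δ
      · have hx0 := hx.1
        have hnn := nn x hx
        have hp : 0 < x ^ (-1 - α) := by positivity
        simp only [Set.indicator_of_mem hx]
        by_cases hxa : x ≤ w⁻¹
        · have m1 : x ∈ Set.Ioc 0 w⁻¹ := ⟨hx0, hxa⟩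
          rw [Set.indicator_of_mem m1]
          refine le_trans ?_ (le_add_of_nonneg_right n3)
          have hs : |Real.sin (z * x)| ≤ w * x := by
            refine Real.abs_sin_le_abs.trans ?_
            rw [abs_mul, ← hw, abs_of_pos hx0]
          have hl : -Real.log x ≤ Real.log w + w ^ (-β) * x ^ (-β) / β := by
            have := Real.log_le_rpow_div (x := (w * x)⁻¹) (by positivity) hβ0
            rw [Real.log_inv, Real.log_mul hw0.ne' hx0.ne', Real.inv_rpow (by positivity),
              ← Real.rpow_neg (by positivity), Real.mul_rpow hw0.le hx0.le] at this
            linarith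
          calc _ ≤ (w * x) * (Real.log w + w ^ (-β) * x ^ (-β) / β) * x ^ (-1 - α) := by
                gcongr
            _ = _ := by
                have a1 : x ^ (-α) = x * x ^ (-1 - α) := by
                  rw [← Real.rpow_one_add' hx0.le (by linarith)]; congr 1; ring
                have a2 : x ^ (-α - β) = x * x ^ (-1 - α) * x ^ (-β) := by
                  rw [← a1, ← Real.rpow_add hx0]; congr 1
                have a3 : w ^ (1 - β) = w * w ^ (-β) := by
                  rw [sub_eq_add_neg, Real.rpow_add hw0, Real.rpow_one]
                rw [a1, a2, a3]; ring
        · push Not at hxa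
          have m3 : x ∈ Set.Ioi w⁻¹ := hxa
          rw [Set.indicator_of_mem m3]
          refine le_trans ?_ (le_add_of_nonneg_left n1)
          have hs : |Real.sin (z * x)| ≤ 1 := Real.abs_sin_le_one _
          have hl : -Real.log x ≤ Real.log w := by
            have := Real.log_le_log ha hxa.le
            rw [Real.log_inv] at this; linarith
          calc _ ≤ 1 * Real.log w * x ^ (-1 - α) := by gcongr
            _ = _ := by rw [one_mul]
      · rw [Set.indicator_of_notMem hx]
        exact add_nonneg n1 n3
  refine key.trans ?_
  rw [integral_add (i1.const_mul _) (i2.const_mul _), integral_const_mul, integral_const_mul,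
    integral_const_mul, e1, e2, e3]
  have b : ∀ s : ℝ, w⁻¹ ^ s = w ^ (-s) := fun s => by
    rw [Real.inv_rpow hw0.le, Real.rpow_neg hw0.le]
  rw [b, b, b]
  have c1 : w * w ^ (-(-α + 1)) = w ^ α := by
    nth_rw 1 [← Real.rpow_one w]
    rw [← Real.rpow_add hw0]; congr 1; ring
  have c2 : w ^ (1 - β) * w ^ (-(-α - β + 1)) = w ^ α := by
    rw [← Real.rpow_add hw0]; congr 1; ring
  have c3 : w ^ (-(-1 - α + 1)) = w ^ α := by congr 1; ring
  have t1 : w * Real.log w * (w ^ (-(-α + 1)) / (-α + 1)) =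
      1 / (1 - α) * w ^ α * Real.log w := by
    rw [← c1, show -α + 1 = 1 - α by ring]; ring
  have t2 : w ^ (1 - β) / β * (w ^ (-(-α - β + 1)) / (-α - β + 1)) =
      1 / (β * (1 - α - β)) * w ^ α := by
    rw [← c2, show -α - β + 1 = 1 - α - β by ring]; field_simp
  have t3 : Real.log w * (-w ^ (-(-1 - α + 1)) / (-1 - α + 1)) =
      1 / α * w ^ α * Real.log w := by
    rw [c3, show -1 - α + 1 = -α by ring, neg_div_neg_eq]; ring
  rw [t1, t2, t3]
  have t4 : 1 / (β * (1 - α - β)) * w ^ α ≤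
      1 / (β * (1 - α - β)) / Real.log (1 / δ) * w ^ α * Real.log w := by
    have : 1 ≤ Real.log w / Real.log (1 / δ) := (one_le_div hL).2 hlw
    calc _ ≤ 1 / (β * (1 - α - β)) * w ^ α * (Real.log w / Real.log (1 / δ)) :=
          le_mul_of_one_le_right (by positivity) this
      _ = _ := by ring
  linarith
end

section
/- Let γ > 0 and let ψ : ℝ → ℂ be continuous with Re ψ(z) ≥ 0 for all z and liminf_{|z|→∞} Re ψ(z)/(|z|·log^γ|z|) > 0. Then ∫_ℝ 1_{{|Im ψ(z)| > (1+Re ψ(z))·log(1+Re ψ(z))}} · |Im ψ(z)| / ((1+Re ψ(z))² + (Im ψ(z))²) dz < ∞. -/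
open MeasureTheory

lemma aux_int_s12 (γ : ℝ) (hγ : 0 < γ) (T : ℝ) (hT : 3 ≤ T) :
    IntegrableOn (fun z : ℝ => z⁻¹ * Real.log z ^ (-(1 + γ))) (Set.Ioi T) := by
  have hd : ∀ x : ℝ, T ≤ x → HasDerivAt (fun z : ℝ => -(γ⁻¹) * Real.log z ^ (-γ))
      (x⁻¹ * Real.log x ^ (-(1 + γ))) x := by
    intro x hx
    have hx0 : 0 < x := by linarith
    have hl : 0 < Real.log x := Real.log_pos (by linarith)
    have h := ((Real.hasDerivAt_log hx0.ne').rpow_const (p := -γ) (Or.inl hl.ne')).const_mul (-(γ⁻¹))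
    have he : x⁻¹ * Real.log x ^ (-(1 + γ))
        = -γ⁻¹ * (x⁻¹ * -γ * Real.log x ^ (-γ - 1)) := by
      rw [show -(1 + γ) = -γ - 1 by ring]
      field_simp
    rw [he]
    exact h
  refine integrableOn_Ioi_deriv_of_nonneg (l := -(γ⁻¹) * 0)
    (hd T le_rfl).continuousAt.continuousWithinAt (fun x hx => hd x (le_of_lt hx)) ?_ ?_
  · intro x hx
    have hx1 : T < x := hx
    have hl : 0 < Real.log x := Real.log_pos (by linarith)
    have hx0 : 0 < x := by linarith
    positivity
  · exact ((tendsto_rpow_neg_atTop hγ).comp Real.tendsto_log_atTop).const_mul _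

/-- Verification of the (EKFR) condition with `f(λ) = log λ` in the proof of
Theorem 4.6: if `ψ : ℝ → ℂ` is continuous with `Re ψ ≥ 0` and
`liminf_{|z|→∞} Re ψ(z)/(|z| log^γ|z|) > 0`, then
`∫_ℝ 1_{|Im ψ| > (1+Re ψ) log(1+Re ψ)} |Im ψ| / ((1+Re ψ)² + (Im ψ)²) dz < ∞`. -/
theorem stmt_12 (γ : ℝ) (hγ : 0 < γ) (ψ : ℝ → ℂ) (hψ : Continuous ψ)
    (hre : ∀ z, 0 ≤ (ψ z).re)
    (hliminf : ∃ c > (0 : ℝ), ∃ R : ℝ, ∀ z : ℝ, R ≤ |z| →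
      c ≤ (ψ z).re / (|z| * Real.log |z| ^ γ)) :
    ∫⁻ z : ℝ,
        {z : ℝ | (1 + (ψ z).re) * Real.log (1 + (ψ z).re) < |(ψ z).im|}.indicator
          (fun z => ENNReal.ofReal
            (|(ψ z).im| / ((1 + (ψ z).re) ^ 2 + (ψ z).im ^ 2))) z
      < ⊤ := by
  obtain ⟨c, hc, R, hR⟩ := hliminf
  have h1 : ∀ᶠ x : ℝ in Filter.atTop, c⁻¹ ≤ Real.log x ^ γ :=
    ((tendsto_rpow_atTop hγ).comp Real.tendsto_log_atTop).eventually_ge_atTop _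
  obtain ⟨T0, hT0⟩ := Filter.eventually_atTop.1 h1
  obtain ⟨T, hTR, hT3, hTT⟩ : ∃ T : ℝ, R ≤ T ∧ 3 ≤ T ∧ T0 ≤ T :=
    ⟨max R (max 3 T0), by simp, by simp, by simp⟩
  let h : ℝ → ℝ := fun z => c⁻¹ * (z⁻¹ * Real.log z ^ (-(1 + γ)))
  let H : ℝ → ℝ := (Set.Ioi T).indicator h
  have hH : Integrable H :=
    (integrable_indicator_iff measurableSet_Ioi).2 ((aux_int_s12 γ hγ T hT3).const_mul c⁻¹)
  have hH0 : ∀ z, 0 ≤ H z := by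
    intro z
    apply Set.indicator_nonneg
    intro x hx
    have hx1 : T < x := hx
    have hl : 0 < Real.log x := Real.log_pos (by linarith)
    have hx0 : 0 < x := by linarith
    simp only [h]
    positivity
  let G : ℝ → ℝ := (Set.Icc (-T) T).indicator (fun _ => 1)
  have hG : Integrable G :=
    (integrable_indicator_iff measurableSet_Icc).2 (by simp)
  have hG0 : ∀ z, 0 ≤ G z := fun z => Set.indicator_nonneg (by simp) z
  have hg : Integrable (fun z => G z + H z + H (-z)) := (hG.add hH).add hH.comp_neg
  refine lt_of_le_of_lt (lintegral_mono (g := fun z => ENNReal.ofReal (G z + H z + H (-z))) ?_)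
    hg.lintegral_lt_top
  intro z
  refine Set.indicator_le' (f := fun z => ENNReal.ofReal
            (|(ψ z).im| / ((1 + (ψ z).re) ^ 2 + (ψ z).im ^ 2)))
    (g := fun z => ENNReal.ofReal (G z + H z + H (-z))) ?_ (fun _ _ => zero_le) z
  intro z hz
  apply ENNReal.ofReal_le_ofReal
  have hz : (1 + (ψ z).re) * Real.log (1 + (ψ z).re) < |(ψ z).im| := hz
  have hr := hre z
  have key : T < |z| → |(ψ z).im| / ((1 + (ψ z).re) ^ 2 + (ψ z).im ^ 2) ≤ h |z| := by
    intro hzT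
    have hL : 0 < Real.log |z| := Real.log_pos (by linarith)
    have hz0 : 0 < |z| := by linarith
    have hA := hR z (by linarith)
    have hB := hT0 |z| (by linarith)
    rw [le_div_iff₀ (by positivity)] at hA
    have hC : 1 ≤ c * Real.log |z| ^ γ := by
      rwa [inv_le_iff_one_le_mul₀' hc] at hB
    have hD : |z| ≤ (ψ z).re := by nlinarith
    have hE : Real.log |z| ≤ Real.log (1 + (ψ z).re) := Real.log_le_log hz0 (by linarith)
    have hF : c * (|z| * Real.log |z| ^ γ) * Real.log |z| ≤ |(ψ z).im| :=
      le_trans (mul_le_mul (by linarith) hE hL.le (by linarith)) hz.le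
    have hP : 0 < c * (|z| * Real.log |z| ^ γ) * Real.log |z| := by positivity
    have hh : h |z| = (c * (|z| * Real.log |z| ^ γ) * Real.log |z|)⁻¹ := by
      simp only [h]
      rw [Real.rpow_neg hL.le, Real.rpow_add hL, Real.rpow_one]
      field_simp
    rw [hh]
    refine le_trans ?_ (inv_anti₀ hP hF)
    have hI : 0 < |(ψ z).im| := by linarith
    rw [div_le_iff₀ (by positivity), ← sq_abs (ψ z).im]
    field_simp
    nlinarith [sq_nonneg (1 + (ψ z).re)]
  by_cases hzT : |z| ≤ T
  · have : G z = 1 := Set.indicator_of_mem (Set.mem_Icc.2 (abs_le.1 hzT)) _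
    have hle : |(ψ z).im| / ((1 + (ψ z).re) ^ 2 + (ψ z).im ^ 2) ≤ 1 := by
      rw [div_le_one (by positivity), ← sq_abs (ψ z).im]
      nlinarith [sq_nonneg (|(ψ z).im| - 1)]
    linarith [hH0 z, hH0 (-z)]
  · push Not at hzT
    have hk := key hzT
    rcases abs_cases z with ⟨he, _⟩ | ⟨he, _⟩
    · rw [he] at hk hzT
      have : H z = h z := Set.indicator_of_mem hzT _
      linarith [hG0 z, hH0 (-z)]
    · rw [he] at hk hzT
      have : H (-z) = h (-z) := Set.indicator_of_mem hzT _
      linarith [hG0 z, hH0 z]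
end

section
/- Let γ > 0, 0 < δ < 1, c > 0, and let μ be a Borel measure on ℝ∖{0} such that μ ≥ c·(−log|x|)^γ·x^{−2}dx on {x ∈ ℝ : 0 < |x| < δ}. Then liminf_{|z|→∞} ( ∫_{ℝ∖{0}} (1 − cos(zx)) μ(dx) ) / (|z|·log^γ|z|) > 0. -/
open MeasureTheory

/-- Example 4.7: if `μ ≥ c (-log|x|)^γ x⁻² dx` on `{0 < |x| < δ}` with
`0 < δ < 1`, then `liminf_{|z|→∞} (∫ (1 - cos(z x)) μ(dx)) / (|z| log^γ|z|) > 0`. -/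
theorem stmt_13 (γ δ c : ℝ) (hγ : 0 < γ) (hδ0 : 0 < δ) (hδ1 : δ < 1) (hc : 0 < c)
    (μ : Measure ℝ) (hμ0 : μ {0} = 0)
    (hdom : ∀ E : Set ℝ, MeasurableSet E → E ⊆ {x : ℝ | 0 < |x| ∧ |x| < δ} →
      ∫⁻ x in E, ENNReal.ofReal (c * (-Real.log |x|) ^ γ / x ^ 2) ≤ μ E) :
    ∃ c' > (0 : ℝ), ∃ R : ℝ, ∀ z : ℝ, R ≤ |z| →
      ENNReal.ofReal (c' * (|z| * Real.log |z| ^ γ))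
        ≤ ∫⁻ x in ({0}ᶜ : Set ℝ), ENNReal.ofReal (1 - Real.cos (z * x)) ∂μ := by
  refine ⟨(4/9) * (c * (1/2) ^ γ / 4), by positivity, max 4 (4/δ), fun z hz => ?_⟩
  obtain ⟨w, hw⟩ : ∃ w, w = |z| := ⟨_, rfl⟩
  have h4 : 4 ≤ w := hw ▸ (le_max_left _ _).trans hz
  have h4δ : 4 / δ ≤ w := hw ▸ (le_max_right _ _).trans hz
  rw [← hw]
  have hw0 : 0 < w := by linarith
  have hlw : 0 ≤ Real.log w := Real.log_nonneg (by linarith)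
  have h2δ : 2 / w < δ := by
    rw [div_le_iff₀ hδ0] at h4δ
    rw [div_lt_iff₀ hw0]
    nlinarith
  set E : Set ℝ := Set.Ioo (1/w) (2/w) with hE
  have hpos : ∀ x ∈ E, 0 < x := fun x hx => lt_trans (by positivity) hx.1
  have hmE : MeasurableSet E := measurableSet_Ioo
  have hsub : E ⊆ {x : ℝ | 0 < |x| ∧ |x| < δ} := by
    intro x hx
    have := hpos x hx
    simp only [Set.mem_setOf_eq, abs_of_pos this]
    exact ⟨this, hx.2.trans h2δ⟩
  have hsub0 : E ⊆ ({0}ᶜ : Set ℝ) := fun x hx => (hpos x hx).ne'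
  have hvol : volume E = ENNReal.ofReal (1/w) := by
    rw [hE, Real.volume_Ioo]; congr 1; ring
  have hlow : ENNReal.ofReal (c * (1/2) ^ γ / 4 * (w * Real.log w ^ γ)) ≤ μ E := by
    refine le_trans ?_ (hdom E hmE hsub)
    calc _ = ENNReal.ofReal (c * (Real.log w * (1/2)) ^ γ / (2/w)^2) * volume E := by
          rw [hvol, ← ENNReal.ofReal_mul (by positivity), Real.mul_rpow hlw (by norm_num)]
          congr 1
          field_simp
          try ring
      _ = ∫⁻ x in E, ENNReal.ofReal (c * (Real.log w * (1/2)) ^ γ / (2/w)^2) := by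
          rw [setLIntegral_const]
      _ ≤ _ := by
          refine setLIntegral_mono' hmE fun x hx => ENNReal.ofReal_le_ofReal ?_
          have hx0 := hpos x hx
          have hl : Real.log w * (1/2) ≤ -Real.log |x| := by
            rw [abs_of_pos hx0]
            have h1 : Real.log x ≤ Real.log (2/w) := Real.log_le_log hx0 hx.2.le
            rw [Real.log_div (by norm_num) hw0.ne'] at h1
            have h2 : Real.log 4 ≤ Real.log w := Real.log_le_log (by norm_num) h4
            rw [show (4:ℝ) = 2^2 by norm_num, Real.log_pow] at h2
            push_cast at h2
            linarith
          have hl0 : 0 ≤ -Real.log |x| := le_trans (by positivity) hl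
          have hx2 := hx.2.le
          gcongr
  have hcos : ∀ x ∈ E, 4/9 ≤ 1 - Real.cos (z * x) := by
    intro x hx
    have hx0 := hpos x hx
    have e : Real.cos (z * x) = Real.cos (w * x) := by
      rw [← Real.cos_abs, abs_mul, ← hw, abs_of_pos hx0]
    have a1 : 1 ≤ w * x := by
      have := (div_lt_iff₀ hw0).1 hx.1; linarith
    have a2 : w * x ≤ 2 := by
      have := (lt_div_iff₀ hw0).1 hx.2; linarith
    have := Real.cos_le_cos_of_nonneg_of_le_pi (by norm_num) (by linarith [Real.pi_gt_three]) a1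
    have := Real.cos_one_le
    rw [e]; linarith
  calc _ = ENNReal.ofReal (4/9) * ENNReal.ofReal (c * (1/2) ^ γ / 4 * (w * Real.log w ^ γ)) := by
        rw [← ENNReal.ofReal_mul (by norm_num)]; congr 1; ring
    _ ≤ ENNReal.ofReal (4/9) * μ E := by gcongr
    _ = ∫⁻ x in E, ENNReal.ofReal (4/9) ∂μ := by rw [setLIntegral_const]
    _ ≤ ∫⁻ x in E, ENNReal.ofReal (1 - Real.cos (z * x)) ∂μ :=
        setLIntegral_mono' hmE fun x hx => ENNReal.ofReal_le_ofReal (hcos x hx)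
    _ ≤ _ := lintegral_mono_set hsub0
end

section
/- Let γ > 0 and let ψ : ℝ → ℂ be continuous with Re ψ(z) ≥ 0 for all z and liminf_{|z|→∞} |ψ(z)|/(|z|·log^{1+γ}|z|) > 0. Then ∫_ℝ 1_{{|Im ψ(z)| > 1 + Re ψ(z)}} · |Im ψ(z)| / ((1+Re ψ(z))² + (Im ψ(z))²) dz < ∞. -/
open MeasureTheory

/-- Verification of the (EKFR) condition with `f ≡ 1` in the proof of
Proposition 4.8: if `ψ : ℝ → ℂ` is continuous with `Re ψ ≥ 0` and
`liminf_{|z|→∞} |ψ(z)|/(|z| log^{1+γ}|z|) > 0`, then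
`∫_ℝ 1_{|Im ψ| > 1 + Re ψ} |Im ψ| / ((1+Re ψ)² + (Im ψ)²) dz < ∞`. -/
theorem stmt_14 (γ : ℝ) (hγ : 0 < γ) (ψ : ℝ → ℂ) (hψ : Continuous ψ)
    (hre : ∀ z, 0 ≤ (ψ z).re)
    (hliminf : ∃ c > (0 : ℝ), ∃ R : ℝ, ∀ z : ℝ, R ≤ |z| →
      c ≤ ‖ψ z‖ / (|z| * Real.log |z| ^ (1 + γ))) :
    ∫⁻ z : ℝ,
        {z : ℝ | 1 + (ψ z).re < |(ψ z).im|}.indicator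
          (fun z => ENNReal.ofReal
            (|(ψ z).im| / ((1 + (ψ z).re) ^ 2 + (ψ z).im ^ 2))) z
      < ⊤ := by
  obtain ⟨c, hc, R, hR⟩ := hliminf
  obtain ⟨A, hAR, hAe⟩ : ∃ A : ℝ, R ≤ A ∧ Real.exp 1 ≤ A :=
    ⟨max R (Real.exp 1), le_max_left _ _, le_max_right _ _⟩
  have hA0 : 0 < A := (Real.exp_pos 1).trans_le hAe
  have hlogA : 1 ≤ Real.log A := by
    rw [Real.le_log_iff_exp_le hA0]; exact hAe
  have h1 : IntegrableOn (fun x : ℝ => x⁻¹ • (fun y : ℝ => y ^ (-(1 + γ))) (Real.log x))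
      (Set.Ioi A) := by
    refine (integrableOn_comp_log_Ioi (fun y : ℝ => y ^ (-(1 + γ))) hA0).2 ?_
    exact integrableOn_Ioi_rpow_of_lt (by linarith) (by linarith)
  let k : ℝ → ℝ := (Set.Ioi A).indicator (fun x : ℝ => x⁻¹ * (Real.log x) ^ (-(1 + γ)))
  have hk : Integrable k := (integrable_indicator_iff measurableSet_Ioi).2 h1
  have hk0 : ∀ x, 0 ≤ k x := by
    intro x
    apply Set.indicator_nonneg
    intro x hx
    have hx' : A < x := hx
    have : 0 ≤ Real.log x := by
      have := Real.log_le_log hA0 hx'.le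
      linarith
    have : 0 < x := hA0.trans hx'
    positivity
  let b : ℝ → ℝ := (Set.Icc (-A) A).indicator (fun _ => (1 : ℝ))
  have hb : Integrable b := by
    refine (integrable_indicator_iff measurableSet_Icc).2 ?_
    exact integrableOn_const (by simp)
  have hb0 : ∀ x, 0 ≤ b x := fun x => Set.indicator_nonneg (fun _ _ => zero_le_one) x
  have hG : Integrable (fun z => b z + 2 / c * (k z + k (-z))) :=
    hb.add ((hk.add hk.comp_neg).const_mul _)
  refine lt_of_le_of_lt (lintegral_mono ?_) hG.lintegral_lt_top
  intro z
  refine Set.indicator_le' (s := {z : ℝ | 1 + (ψ z).re < |(ψ z).im|}) (f := fun z => ENNReal.ofReal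
            (|(ψ z).im| / ((1 + (ψ z).re) ^ 2 + (ψ z).im ^ 2)))
    (g := fun z => ENNReal.ofReal (b z + 2 / c * (k z + k (-z)))) ?_ (fun _ _ => zero_le) z
  intro z hz
  have hz' : 1 + (ψ z).re < |(ψ z).im| := hz
  apply ENNReal.ofReal_le_ofReal
  have hr := hre z
  have him : 0 < |(ψ z).im| := by linarith
  have hF : |(ψ z).im| / ((1 + (ψ z).re) ^ 2 + (ψ z).im ^ 2) ≤ 1 / |(ψ z).im| := by
    rw [div_le_div_iff₀ (by positivity) him, ← sq_abs (ψ z).im]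
    nlinarith [sq_nonneg (1 + (ψ z).re)]
  by_cases hzA : |z| ≤ A
  · have : b z = 1 := Set.indicator_of_mem (s := Set.Icc (-A) A) (Set.mem_Icc.2 (abs_le.1 hzA)) _
    have h2 : 0 ≤ 2 / c * (k z + k (-z)) :=
      mul_nonneg (by positivity) (add_nonneg (hk0 _) (hk0 _))
    have h3 : 1 / |(ψ z).im| ≤ 1 := by
      rw [div_le_one him]; linarith
    linarith
  · push Not at hzA
    have hkz : k |z| ≤ k z + k (-z) := by
      rcases abs_choice z with h | h <;> rw [h]
      · linarith [hk0 (-z)]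
      · linarith [hk0 z]
    have hkv : k |z| = |z|⁻¹ * (Real.log |z|) ^ (-(1 + γ)) := Set.indicator_of_mem hzA _
    have hzpos : 0 < |z| := hA0.trans hzA
    have hlog : 0 < Real.log |z| := by
      have := Real.log_le_log hA0 hzA.le
      linarith
    have hn := hR z (hAR.trans hzA.le)
    have hp : 0 < |z| * Real.log |z| ^ (1 + γ) := by positivity
    rw [le_div_iff₀ hp] at hn
    have hn2 : ‖ψ z‖ ≤ 2 * |(ψ z).im| := by
      have := Complex.norm_le_abs_re_add_abs_im (ψ z)
      rw [abs_of_nonneg hr] at this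
      linarith
    have h4 : 1 / |(ψ z).im| ≤ 2 / c * k |z| := by
      rw [hkv, Real.rpow_neg hlog.le, ← mul_inv, ← div_eq_mul_inv, div_div,
        div_le_div_iff₀ him (by positivity)]
      linarith
    have h5 : 2 / c * k |z| ≤ 2 / c * (k z + k (-z)) :=
      mul_le_mul_of_nonneg_left hkz (by positivity)
    linarith [hb0 z]
end

section
/- Let 1/2 < α < 1 and let n ≥ 2 be a real number. Then for every z ∈ [n/2, 2n]: ∫_{1/(2n²)}^{1/n²} (1 − cos(zx))·x^{−1−α} dx ≤ 2n^{2α−2}/(2−α) and ∫_{1/(2n²)}^{1/n²} sin(zx)·x^{−1−α} dx ≥ n^{2α−1}/8. -/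
open MeasureTheory intervalIntegral

/-- Estimates (jkl1) and (jkl2) in Subsection 5.1: for `1/2 < α < 1`, `n ≥ 2`
and `z ∈ [n/2, 2n]`,
`∫_{1/(2n²)}^{1/n²} (1 - cos(z x)) x^{-1-α} dx ≤ 2 n^{2α-2}/(2-α)` and
`∫_{1/(2n²)}^{1/n²} sin(z x) x^{-1-α} dx ≥ n^{2α-1}/8`. -/
theorem stmt_15 (α n : ℝ) (hα1 : 1 / 2 < α) (hα2 : α < 1) (hn : 2 ≤ n)
    (z : ℝ) (hz : z ∈ Set.Icc (n / 2) (2 * n)) :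
    (∫ x in (1 / (2 * n ^ 2))..(1 / n ^ 2), (1 - Real.cos (z * x)) * x ^ (-1 - α))
        ≤ 2 * n ^ (2 * α - 2) / (2 - α) ∧
    n ^ (2 * α - 1) / 8
        ≤ ∫ x in (1 / (2 * n ^ 2))..(1 / n ^ 2), Real.sin (z * x) * x ^ (-1 - α) := by
  obtain ⟨hz1, hz2⟩ := hz
  have hn0 : 0 < n := by linarith
  have hz0 : 0 < z := by linarith
  have ha0 : 0 < 1 / (2 * n ^ 2) := by positivity
  have hab : 1 / (2 * n ^ 2) ≤ 1 / n ^ 2 :=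
    one_div_le_one_div_of_le (by positivity) (by nlinarith)
  have hlen : 1 / n ^ 2 - 1 / (2 * n ^ 2) = 1 / (2 * n ^ 2) := by field_simp; norm_num
  have hpow : ∀ s : ℝ, (1 / n ^ 2) ^ s = n ^ (-(2 * s)) := by
    intro s
    rw [one_div, Real.inv_rpow (by positivity), ← Real.rpow_natCast n 2,
      ← Real.rpow_mul hn0.le, ← Real.rpow_neg hn0.le]
    norm_num
  have hcont : ContinuousOn (fun x : ℝ => x ^ (-1 - α))
      (Set.uIcc (1 / (2 * n ^ 2)) (1 / n ^ 2)) := by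
    rw [Set.uIcc_of_le hab]
    intro x hx
    exact (Real.continuousAt_rpow_const x _
      (Or.inl (lt_of_lt_of_le ha0 hx.1).ne')).continuousWithinAt
  have hi1 : IntervalIntegrable (fun x : ℝ => (1 - Real.cos (z * x)) * x ^ (-1 - α)) volume
      (1 / (2 * n ^ 2)) (1 / n ^ 2) :=
    (ContinuousOn.mul (by fun_prop) hcont).intervalIntegrable
  have hi2 : IntervalIntegrable (fun x : ℝ => Real.sin (z * x) * x ^ (-1 - α)) volume
      (1 / (2 * n ^ 2)) (1 / n ^ 2) :=
    (ContinuousOn.mul (by fun_prop) hcont).intervalIntegrable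
  constructor
  · have h := integral_mono_on (g := fun _ => 2 * n ^ 2 * n ^ (2 * α - 2)) hab hi1
      intervalIntegrable_const (by
        intro x hx
        have hx0 : 0 < x := lt_of_lt_of_le ha0 hx.1
        have h1 : 1 - Real.cos (z * x) ≤ 2 * n ^ 2 * x ^ 2 := by
          have := Real.one_sub_sq_div_two_le_cos (x := z * x)
          have h2 : z ^ 2 ≤ (2 * n) ^ 2 := by gcongr
          have h3 : z ^ 2 * x ^ 2 ≤ (2 * n) ^ 2 * x ^ 2 := by gcongr
          nlinarith
        have h4 : x ^ (1 - α) ≤ n ^ (2 * α - 2) := by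
          have := Real.rpow_le_rpow hx0.le hx.2 (by linarith : 0 ≤ 1 - α)
          rw [hpow] at this
          convert this using 2
          ring
        have h5 : x ^ 2 * x ^ (-1 - α) = x ^ (1 - α) := by
          rw [← Real.rpow_natCast x 2, ← Real.rpow_add hx0]
          congr 1
          push_cast
          ring
        calc (1 - Real.cos (z * x)) * x ^ (-1 - α)
            ≤ 2 * n ^ 2 * x ^ 2 * x ^ (-1 - α) := by gcongr
          _ = 2 * n ^ 2 * x ^ (1 - α) := by rw [mul_assoc, h5]
          _ ≤ 2 * n ^ 2 * n ^ (2 * α - 2) := by gcongr)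
    rw [intervalIntegral.integral_const, hlen, smul_eq_mul] at h
    have hp : 0 < n ^ (2 * α - 2) := by positivity
    have e : 1 / (2 * n ^ 2) * (2 * n ^ 2 * n ^ (2 * α - 2)) = n ^ (2 * α - 2) := by
      field_simp
    rw [e] at h
    refine h.trans ?_
    rw [le_div_iff₀ (by linarith)]
    nlinarith
  · have h := integral_mono_on (f := fun _ => n / 4 * n ^ (2 * α)) hab
      intervalIntegrable_const hi2 (by
        intro x hx
        have hx0 : 0 < x := lt_of_lt_of_le ha0 hx.1
        have hy0 : 0 < z * x := by positivity
        have hy1 : z * x ≤ 1 := by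
          calc z * x ≤ 2 * n * (1 / n ^ 2) := by
                have := hx.2
                gcongr
            _ = 2 / n := by field_simp
            _ ≤ 1 := by rw [div_le_one hn0]; exact hn
        have h1 : n / 4 * x ≤ Real.sin (z * x) := by
          have := Real.sin_gt_sub_cube hy0
          have h2 : (z * x) ^ 3 ≤ z * x := pow_le_of_le_one hy0.le hy1 (by norm_num)
          have h3 : n / 2 * x ≤ z * x := by gcongr
          linarith
        have h4 : n ^ (2 * α) ≤ x ^ (-α) := by
          have := Real.rpow_le_rpow_of_nonpos hx0 hx.2 (by linarith : -α ≤ 0)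
          rw [hpow] at this
          convert this using 2
          ring
        have h5 : x * x ^ (-1 - α) = x ^ (-α) := by
          nth_rewrite 1 [← Real.rpow_one x]
          rw [← Real.rpow_add hx0]
          congr 1
          ring
        calc n / 4 * n ^ (2 * α) ≤ n / 4 * x ^ (-α) := by gcongr
          _ = n / 4 * x * x ^ (-1 - α) := by rw [mul_assoc, h5]
          _ ≤ Real.sin (z * x) * x ^ (-1 - α) := by gcongr)
    rw [intervalIntegral.integral_const, hlen, smul_eq_mul] at h
    refine le_trans (le_of_eq ?_) h
    rw [Real.rpow_sub hn0, Real.rpow_one]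
    field_simp
    norm_num
end
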